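/- arXiv:1906.12197 — 5 statements merged into one kernel-verified Lean document; each statement's English description precedes it below -/
import Mathlib

section
/- Let Γ be a group and let ρ₁, ρ₂ be unitary representations of Γ on complex Hilbert spaces V₁ and V₂. Suppose T : V₁ → V₂ is a nonzero compact continuous linear operator that intertwines the representations, i.e., T ∘ ρ₁(g) = ρ₂(g) ∘ T for all g ∈ Γ. Then both ρ₁ and ρ₂ admit nonzero finite-dimensional invariant subspaces: there exist nonzero finite-dimensional subspaces W₁ ⊆ V₁ and W₂ ⊆ V₂ with ρ₁(g)W₁ = W₁ and ρ₂(g)W₂ = W₂ for all g ∈ Γ. -/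
/-! A compact operator `T` on a Hilbert space attains its norm: `T* T` has an eigenvalue of absolute
value `‖T‖ ^ 2`. By the parallelogram law the vectors with `‖T x‖ = ‖T‖ * ‖x‖` form a closed
subspace. Up to the scalar `‖T‖`, the restriction of `T` to it is a compact isometry, so the
subspace is finite-dimensional. Its definition only involves norms, so it is preserved by every
isometry that `T` intertwines with another isometry; its image under `T` is the subspace of the
codomain. -/

open Module Module.End UniformSpace

lemma finiteDimensional_of_isCompactOperator_of_isProperMap (𝕜 : Type*) {E F : Type*}
    [NontriviallyNormedField 𝕜] [CompleteSpace 𝕜] [AddCommGroup E] [Module 𝕜 E]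
    [TopologicalSpace E] [T2Space E] [IsTopologicalAddGroup E] [ContinuousSMul 𝕜 E]
    [TopologicalSpace F] {f : E → F} (hf : IsCompactOperator f) (hf' : IsProperMap f) :
    FiniteDimensional 𝕜 E :=
  have ⟨K, hK, hfK⟩ := hf
  .of_isCompactOperator_id ⟨f ⁻¹' K, hf'.isCompact_preimage hK, hfK⟩

lemma map_eq_of_map_le_of_injective {K V : Type*} [DivisionRing K] [AddCommGroup V] [Module K V]
    {f : V →ₗ[K] V} (hf : Function.Injective f) {W : Submodule K V} [FiniteDimensional K W]
    (hW : W.map f ≤ W) : W.map f = W :=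
  Submodule.eq_of_le_of_finrank_eq hW (W.equivMapOfInjective f hf).finrank_eq.symm

section NormAttaining

variable {𝕜 E F : Type*} [RCLike 𝕜]
  [NormedAddCommGroup E] [InnerProductSpace 𝕜 E] [NormedAddCommGroup F] [InnerProductSpace 𝕜 F]

lemma norm_map_add_eq_of_norm_map_eq {T : E →L[𝕜] F} {x y : E}
    (hx : ‖T x‖ = ‖T‖ * ‖x‖) (hy : ‖T y‖ = ‖T‖ * ‖y‖) : ‖T (x + y)‖ = ‖T‖ * ‖x + y‖ := by
  have hdomain := parallelogram_law_with_norm 𝕜 x y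
  have hcodomain := parallelogram_law_with_norm 𝕜 (T x) (T y)
  rw [← map_add, ← map_sub, hx, hy] at hcodomain
  have hsub : ‖T (x - y)‖ ^ 2 ≤ (‖T‖ * ‖x - y‖) ^ 2 := by gcongr; exact T.le_opNorm _
  refine (T.le_opNorm _).antisymm ((sq_le_sq₀ (by positivity) (norm_nonneg _)).1 ?_)
  linear_combination hsub + ‖T‖ ^ 2 * hdomain - hcodomain

/-- The subspace of the vectors at which a bounded operator `T` between inner product spaces
attains its norm; it is the eigenspace of `T* T` for `‖T‖ ^ 2`, but the description by norms
makes sense without completeness and is visibly invariant under isometries. -/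
def normAttainingSubmodule (T : E →L[𝕜] F) : Submodule 𝕜 E where
  carrier := {x | ‖T x‖ = ‖T‖ * ‖x‖}
  add_mem' := norm_map_add_eq_of_norm_map_eq
  zero_mem' := by simp
  smul_mem' c x (hx : ‖T x‖ = ‖T‖ * ‖x‖) := by
    simp only [Set.mem_ofPred_eq, map_smul, norm_smul, hx, mul_left_comm]

namespace normAttainingSubmodule

lemma mem_iff {T : E →L[𝕜] F} {x : E} :
    x ∈ normAttainingSubmodule T ↔ ‖T x‖ = ‖T‖ * ‖x‖ :=
  Iff.rfl

lemma isClosed (T : E →L[𝕜] F) : IsClosed (normAttainingSubmodule T : Set E) :=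
  isClosed_eq (by fun_prop) (by fun_prop)

lemma map_ne_zero {T : E →L[𝕜] F} {x : E} (hT : T ≠ 0) (hx : x ∈ normAttainingSubmodule T)
    (hx₀ : x ≠ 0) : T x ≠ 0 := by
  rw [← norm_ne_zero_iff, mem_iff.1 hx]
  exact mul_ne_zero (norm_ne_zero_iff.2 hT) (norm_ne_zero_iff.2 hx₀)

lemma antilipschitzWith_comp_subtypeL {T : E →L[𝕜] F} (hT : T ≠ 0) :
    AntilipschitzWith ‖T‖₊⁻¹ (T ∘L (normAttainingSubmodule T).subtypeL) :=
  ContinuousLinearMap.antilipschitz_of_bound _ fun x ↦ by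
    have hx : ‖T x‖ = ‖T‖ * ‖(x : E)‖ := mem_iff.1 x.2
    simp [hx, norm_ne_zero_iff.2 hT]

lemma finiteDimensional [CompleteSpace E] {T : E →L[𝕜] F} (hT : T ≠ 0)
    (hTc : IsCompactOperator T) : FiniteDimensional 𝕜 (normAttainingSubmodule T) :=
  have : CompleteSpace (normAttainingSubmodule T) := (isClosed T).completeSpace_coe
  have hT' := (antilipschitzWith_comp_subtypeL hT).isClosedEmbedding
    (T ∘L (normAttainingSubmodule T).subtypeL).uniformContinuous
  finiteDimensional_of_isCompactOperator_of_isProperMap 𝕜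
    (hTc.comp_clm (normAttainingSubmodule T).subtypeL) hT'.isProperMap

lemma map_le_of_intertwines {T : E →L[𝕜] F} {A : E →ₗᵢ[𝕜] E} {B : F →ₗᵢ[𝕜] F}
    (h : ∀ x, T (A x) = B (T x)) :
    (normAttainingSubmodule T).map A.toLinearMap ≤ normAttainingSubmodule T := by
  rintro _ ⟨x, hx, rfl⟩
  calc ‖T (A x)‖ = ‖T x‖ := by rw [h, B.norm_map]
    _ = ‖T‖ * ‖x‖ := hx
    _ = ‖T‖ * ‖A x‖ := by rw [A.norm_map]

end normAttainingSubmodule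

lemma exists_hasEigenvalue_norm_eq [CompleteSpace E] {S : E →L[𝕜] E} (hS : S ≠ 0)
    (hSc : IsCompactOperator S) (hSsa : IsSelfAdjoint S) :
    ∃ μ, HasEigenvalue (S : End 𝕜 E) μ ∧ ‖μ‖ = ‖S‖ := by
  have hradius : spectralRadius 𝕜 S = ‖S‖₊ := S.spectralRadius_eq_nnnorm hSsa
  have hspectrum : (spectrum 𝕜 S).Nonempty := by
    by_contra! hempty
    exact hS (nnnorm_eq_zero.1 (by simpa [spectralRadius, hempty] using hradius.symm))
  obtain ⟨μ, hμ, hμr⟩ := spectrum.exists_nnnorm_eq_spectralRadius_of_nonempty hspectrum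
  have hnorm : ‖μ‖ = ‖S‖ := congrArg NNReal.toReal (ENNReal.coe_injective (hμr.trans hradius))
  have hμ₀ : μ ≠ 0 := norm_ne_zero_iff.1 (hnorm ▸ norm_ne_zero_iff.2 hS)
  exact ⟨μ, (hSc.hasEigenvalue_iff_mem_spectrum hμ₀).2 hμ, hnorm⟩

lemma norm_map_sq_of_adjoint_apply_eq_smul [CompleteSpace E] [CompleteSpace F] {T : E →L[𝕜] F}
    {μ : 𝕜} {x : E} (h : T.adjoint (T x) = μ • x) : ‖T x‖ ^ 2 = ‖μ‖ * ‖x‖ ^ 2 := by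
  have hinner : inner 𝕜 (T x) (T x) = μ * inner 𝕜 x x := by
    rw [← T.adjoint_inner_right, h, inner_smul_right]
  simpa using congrArg norm hinner

lemma exists_ne_zero_norm_map_eq_of_completeSpace [CompleteSpace E] [CompleteSpace F]
    {T : E →L[𝕜] F} (hT : T ≠ 0) (hTc : IsCompactOperator T) :
    ∃ x ≠ 0, ‖T x‖ = ‖T‖ * ‖x‖ := by
  have hnorm : ‖T.adjoint ∘L T‖ = ‖T‖ * ‖T‖ := T.norm_adjoint_comp_self
  have hS : T.adjoint ∘L T ≠ 0 :=
    norm_ne_zero_iff.1 (hnorm ▸ mul_self_ne_zero.2 (norm_ne_zero_iff.2 hT))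
  obtain ⟨μ, hμ, hμn⟩ := exists_hasEigenvalue_norm_eq hS (hTc.clm_comp T.adjoint)
    (ContinuousLinearMap.isPositive_adjoint_comp_self T).isSelfAdjoint
  obtain ⟨x, hx, hx₀⟩ := hμ.exists_hasEigenvector
  have hx' : T.adjoint (T x) = μ • x := mem_eigenspace_iff.1 hx
  refine ⟨x, hx₀, (sq_eq_sq₀ (norm_nonneg _) (by positivity)).1 ?_⟩
  calc ‖T x‖ ^ 2 = ‖μ‖ * ‖x‖ ^ 2 := norm_map_sq_of_adjoint_apply_eq_smul hx'
    _ = (‖T‖ * ‖x‖) ^ 2 := by rw [hμn, hnorm, mul_pow, sq ‖T‖]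

lemma exists_ne_zero_norm_map_eq [CompleteSpace E] {T : E →L[𝕜] F} (hT : T ≠ 0)
    (hTc : IsCompactOperator T) : ∃ x ≠ 0, ‖T x‖ = ‖T‖ * ‖x‖ := by
  let ι : F →ₗᵢ[𝕜] Completion F := Completion.toComplₗᵢ
  have hnorm : ‖ι.toContinuousLinearMap ∘L T‖ = ‖T‖ := ι.norm_toContinuousLinearMap_comp
  have hT' : ι.toContinuousLinearMap ∘L T ≠ 0 :=
    norm_ne_zero_iff.1 (hnorm ▸ norm_ne_zero_iff.2 hT)
  obtain ⟨x, hx₀, hx⟩ :=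
    exists_ne_zero_norm_map_eq_of_completeSpace hT' (hTc.clm_comp ι.toContinuousLinearMap)
  refine ⟨x, hx₀, ?_⟩
  rw [← hnorm, ← hx]
  exact (ι.norm_map (T x)).symm

end NormAttaining

theorem finiteDimensional_subrepresentations_of_compact_intertwiner_general
    {Γ 𝕜 V₁ V₂ : Type*} [RCLike 𝕜]
    [NormedAddCommGroup V₁] [InnerProductSpace 𝕜 V₁] [CompleteSpace V₁]
    [NormedAddCommGroup V₂] [InnerProductSpace 𝕜 V₂]
    (ρ₁ : Γ → V₁ →ₗᵢ[𝕜] V₁) (ρ₂ : Γ → V₂ →ₗᵢ[𝕜] V₂)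
    (T : V₁ →L[𝕜] V₂) (hT₀ : T ≠ 0) (hTc : IsCompactOperator T)
    (hint : ∀ g x, T (ρ₁ g x) = ρ₂ g (T x)) :
    (∃ W₁ : Submodule 𝕜 V₁, W₁ ≠ ⊥ ∧ FiniteDimensional 𝕜 W₁ ∧
      ∀ g, W₁.map (ρ₁ g).toLinearMap = W₁) ∧
    (∃ W₂ : Submodule 𝕜 V₂, W₂ ≠ ⊥ ∧ FiniteDimensional 𝕜 W₂ ∧
      ∀ g, W₂.map (ρ₂ g).toLinearMap = W₂) := by
  let W := normAttainingSubmodule T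
  obtain ⟨x, hx₀, hx⟩ : ∃ x ≠ 0, x ∈ W := exists_ne_zero_norm_map_eq hT₀ hTc
  have hfin : FiniteDimensional 𝕜 W := normAttainingSubmodule.finiteDimensional hT₀ hTc
  have hinv (g) : W.map (ρ₁ g).toLinearMap = W :=
    map_eq_of_map_le_of_injective (ρ₁ g).injective
      (normAttainingSubmodule.map_le_of_intertwines (hint g))
  have hTx : T x ≠ 0 := normAttainingSubmodule.map_ne_zero hT₀ hx hx₀
  have hcomm (g) : (ρ₂ g).toLinearMap ∘ₗ T.toLinearMap = T.toLinearMap ∘ₗ (ρ₁ g).toLinearMap :=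
    LinearMap.ext fun y ↦ (hint g y).symm
  refine ⟨⟨W, W.ne_bot_iff.2 ⟨x, hx, hx₀⟩, hfin, hinv⟩, W.map T.toLinearMap,
    (Submodule.ne_bot_iff _).2 ⟨T x, Submodule.mem_map_of_mem hx, hTx⟩, inferInstance, fun g ↦ ?_⟩
  rw [← Submodule.map_comp, hcomm, Submodule.map_comp, hinv]

/-- If `T` is a nonzero compact intertwiner between two unitary representations `ρ₁`, `ρ₂`
of a group `Γ`, then both representations admit nonzero finite-dimensional invariant
subspaces. -/
theorem finiteDimensional_subrepresentations_of_compact_intertwiner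
    {Γ : Type*} [Group Γ]
    {V₁ : Type*} [NormedAddCommGroup V₁] [InnerProductSpace ℂ V₁] [CompleteSpace V₁]
    {V₂ : Type*} [NormedAddCommGroup V₂] [InnerProductSpace ℂ V₂] [CompleteSpace V₂]
    (ρ₁ : Γ →* (V₁ ≃ₗᵢ[ℂ] V₁)) (ρ₂ : Γ →* (V₂ ≃ₗᵢ[ℂ] V₂))
    (T : V₁ →L[ℂ] V₂) (hT₀ : T ≠ 0) (hTc : IsCompactOperator T)
    (hint : ∀ g : Γ, ∀ x : V₁, T (ρ₁ g x) = ρ₂ g (T x)) :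
    (∃ W₁ : Submodule ℂ V₁, W₁ ≠ ⊥ ∧ FiniteDimensional ℂ W₁ ∧
      ∀ g : Γ, W₁.map ((ρ₁ g).toLinearEquiv : V₁ →ₗ[ℂ] V₁) = W₁) ∧
    (∃ W₂ : Submodule ℂ V₂, W₂ ≠ ⊥ ∧ FiniteDimensional ℂ W₂ ∧
      ∀ g : Γ, W₂.map ((ρ₂ g).toLinearEquiv : V₂ →ₗ[ℂ] V₂) = W₂) :=
  finiteDimensional_subrepresentations_of_compact_intertwiner_general
    (fun g ↦ (ρ₁ g).toLinearIsometry) (fun g ↦ (ρ₂ g).toLinearIsometry) T hT₀ hTc hint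
end

section
/- Let G be a group, K a subgroup of G, and ρ a unitary representation of G on a complex Hilbert space H. Suppose v ∈ H is a nonzero K-fixed vector and every K-fixed vector in H is a scalar multiple of v. Then the closed linear span W of the orbit {ρ(g)v : g ∈ G} is an irreducible subrepresentation: the only closed subspaces of W invariant under ρ(g) for all g ∈ G are {0} and W itself. -/
/-!
The orthogonal projection onto an invariant closed subspace `U` commutes with `ρ`, because every
`ρ g` maps `U` isometrically onto itself. An operator commuting with `ρ` preserves the line of
`K`-fixed vectors, so it multiplies `v`, and therefore the whole cyclic span of `v`, by a
scalar `c`. If `U` lies in the cyclic span and contains some `x ≠ 0`, then `x = P x = c • x` for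
the projection `P`, so `c = 1` and `P` is the identity on the cyclic span.
-/

section CyclicSpan

variable {R V ι F : Type*} [CommSemiring R] [AddCommMonoid V] [Module R V] [TopologicalSpace V]
  [ContinuousAdd V] [ContinuousConstSMul R V] [FunLike F V V]

variable (R) in
/-- The closed cyclic span of `v`: the closed linear span of the orbit of `v` under a family of
maps `ρ`, for instance the operators of a group representation. -/
def closedCyclicSpan (ρ : ι → F) (v : V) : Submodule R V :=
  (Submodule.span R (Set.range fun i => ρ i v)).topologicalClosure

variable [MulActionHomClass F R V V] [T2Space V]

theorem apply_eq_smul_of_mem_closedCyclicSpan {ρ : ι → F} {T : V →L[R] V}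
    (hT : ∀ i x, ρ i (T x) = T (ρ i x)) {v : V} {c : R} (hv : T v = c • v)
    {w : V} (hw : w ∈ closedCyclicSpan R ρ v) : T w = c • w := by
  have horbit : Set.EqOn T (c • ContinuousLinearMap.id R V : V →L[R] V)
      (Set.range fun i => ρ i v) := by
    rintro _ ⟨i, rfl⟩
    calc T (ρ i v) = ρ i (T v) := (hT i v).symm
      _ = c • ρ i v := by rw [hv, map_smul]
  exact ContinuousLinearMap.eqOn_closure_span horbit hw

theorem exists_forall_mem_closedCyclicSpan_apply_eq_smul {ρ : ι → F} {K : Set ι} {v : V}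
    (hfix : ∀ k ∈ K, ρ k v = v)
    (huniq : ∀ w : V, (∀ k ∈ K, ρ k w = w) → ∃ c : R, w = c • v)
    {T : V →L[R] V} (hT : ∀ i x, ρ i (T x) = T (ρ i x)) :
    ∃ c : R, ∀ w ∈ closedCyclicSpan R ρ v, T w = c • w := by
  have hTfix : ∀ k ∈ K, ρ k (T v) = T v := fun k hk => by rw [hT, hfix k hk]
  obtain ⟨c, hc⟩ := huniq (T v) hTfix
  exact ⟨c, fun _ => apply_eq_smul_of_mem_closedCyclicSpan hT hc⟩

end CyclicSpan

section InvariantSubspace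

variable {𝕜 H : Type*} [RCLike 𝕜] [NormedAddCommGroup H] [InnerProductSpace 𝕜 H]
  {U : Submodule 𝕜 H}

theorem map_starProjection_of_map_eq [U.HasOrthogonalProjection] {f : H →ₗᵢ[𝕜] H}
    (hf : U.map f.toLinearMap = U) (x : H) : f (U.starProjection x) = U.starProjection (f x) := by
  have : (U.map f.toLinearMap).HasOrthogonalProjection := by rwa [hf]
  rw [f.map_starProjection]
  simp only [hf]

theorem map_starProjection_of_invariant {G : Type*} [Group G] {ρ : G →* (H ≃ₗᵢ[𝕜] H)}
    [U.HasOrthogonalProjection] (hU : ∀ g : G, ∀ x ∈ U, ρ g x ∈ U) (g : G) (x : H) :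
    ρ g (U.starProjection x) = U.starProjection (ρ g x) := by
  have hmap : U.map (ρ g).toLinearIsometry.toLinearMap = U := by
    refine le_antisymm (Submodule.map_le_iff_le_comap.2 (hU g)) fun y hy => ?_
    exact ⟨ρ g⁻¹ y, hU g⁻¹ y hy, by simp⟩
  exact map_starProjection_of_map_eq hmap x

end InvariantSubspace

theorem cyclic_span_of_unique_spherical_vector_irreducible_general
    {𝕜 G H : Type*} [RCLike 𝕜] [Group G] [NormedAddCommGroup H] [InnerProductSpace 𝕜 H]
    (ρ : G →* (H ≃ₗᵢ[𝕜] H)) (K : Set G) (v : H)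
    (hfix : ∀ k ∈ K, ρ k v = v)
    (huniq : ∀ w : H, (∀ k ∈ K, ρ k w = w) → ∃ c : 𝕜, w = c • v)
    (U : Submodule 𝕜 H) [U.HasOrthogonalProjection] (hle : U ≤ closedCyclicSpan 𝕜 ρ v)
    (hU : ∀ g : G, ∀ x ∈ U, ρ g x ∈ U) :
    U = ⊥ ∨ U = closedCyclicSpan 𝕜 ρ v := by
  obtain ⟨c, hc⟩ := exists_forall_mem_closedCyclicSpan_apply_eq_smul hfix huniq
    (map_starProjection_of_invariant hU)
  refine or_iff_not_imp_left.2 fun hbot => hle.antisymm fun w hw => ?_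
  obtain ⟨x, hxU, hx⟩ := U.exists_mem_ne_zero_of_ne_bot hbot
  have hcx : c • x = (1 : 𝕜) • x := by
    rw [← hc x (hle hxU), Submodule.starProjection_eq_self_iff.2 hxU, one_smul]
  have hc1 : c = 1 := smul_left_injective 𝕜 hx hcx
  rw [← Submodule.starProjection_eq_self_iff, hc w hw, hc1, one_smul]

/-- If `v` is a nonzero `K`-fixed vector of a unitary representation `ρ` of `G`, unique up to
scalar among `K`-fixed vectors, then the closed `G`-cyclic span of `v` is an irreducible
subrepresentation. -/
theorem cyclic_span_of_unique_spherical_vector_irreducible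
    {G : Type*} [Group G] {H : Type*} [NormedAddCommGroup H]
    [InnerProductSpace ℂ H] [CompleteSpace H]
    (ρ : G →* (H ≃ₗᵢ[ℂ] H)) (K : Subgroup G) (v : H) (hv : v ≠ 0)
    (hfix : ∀ k ∈ K, ρ k v = v)
    (huniq : ∀ w : H, (∀ k ∈ K, ρ k w = w) → ∃ c : ℂ, w = c • v) :
    ∀ U : Submodule ℂ H, IsClosed (U : Set H) →
      U ≤ (Submodule.span ℂ (Set.range fun g : G => ρ g v)).topologicalClosure →
      (∀ g : G, ∀ x ∈ U, ρ g x ∈ U) →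
      U = ⊥ ∨ U = (Submodule.span ℂ (Set.range fun g : G => ρ g v)).topologicalClosure := by
  intro U hclosed hle hU
  have : CompleteSpace U := hclosed.completeSpace_coe
  exact cyclic_span_of_unique_spherical_vector_irreducible_general ρ K v hfix huniq U hle hU
end

section
/- Let G be a group and L a subgroup of G such that every orbit of the natural action of L on the coset space G/L, other than the singleton orbit of the base coset eL, is infinite. Let f be an element of the Hilbert space ℓ²(G/L) of square-summable complex-valued functions on G/L. If f is L-invariant, i.e., f(l·x) = f(x) for all l ∈ L and all x ∈ G/L, then f(x) = 0 for every x ≠ eL; equivalently, f is a scalar multiple of the delta function δ_{eL} supported at the base coset. -/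
open scoped ENNReal

theorem finite_setOf_le_norm_of_memℓp {ι : Type*} {E : ι → Type*}
    [∀ i, NormedAddCommGroup (E i)] {p : ℝ≥0∞} (hp : p ≠ ∞) {f : ∀ i, E i} (hf : Memℓp f p)
    {ε : ℝ} (hε : 0 < ε) : {i | ε ≤ ‖f i‖}.Finite := by
  -- Raising the exponent covers `p = 0`, where `Memℓp` means finite support.
  set q := max p 1
  have hq : 0 < q.toReal :=
    ENNReal.toReal_pos (zero_lt_one.trans_le (le_max_right p 1)).ne'
      (max_ne_top hp ENNReal.one_ne_top)
  have hsum : Summable fun i => ‖f i‖ ^ q.toReal :=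
    (hf.of_exponent_ge (le_max_left p 1)).summable hq
  have hfin : {i | ¬‖f i‖ ^ q.toReal < ε ^ q.toReal}.Finite :=
    hsum.tendsto_cofinite_zero.eventually_lt_const (Real.rpow_pos_of_pos hε _)
  exact hfin.subset fun i hi => (Real.rpow_le_rpow hε.le hi hq.le).not_gt

theorem invariant_l2_function_supported_at_base_coset_general {M α E : Type*} [SMul M α]
    [NormedAddCommGroup E] {p : ℝ≥0∞} (hp : p ≠ ∞) {f : α → E} (hf : Memℓp f p)
    (hinv : ∀ (m : M) (x : α), f (m • x) = f x) :
    Function.support f ⊆ {x | (MulAction.orbit M x).Finite} := by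
  intro x hx
  have horbit : MulAction.orbit M x ⊆ {y | ‖f x‖ ≤ ‖f y‖} := by
    rintro _ ⟨m, rfl⟩
    exact (congrArg norm (hinv m x)).ge
  exact (finite_setOf_le_norm_of_memℓp hp hf (norm_pos_iff.mpr hx)).subset horbit

/-- If all orbits of a subgroup `L` on the coset space `G ⧸ L`, other than the base coset,
are infinite, then any `L`-invariant function in `ℓ²(G ⧸ L)` vanishes away from the base
coset, i.e. it is a scalar multiple of the delta function at the base coset. -/
theorem invariant_l2_function_supported_at_base_coset
    {G : Type*} [Group G] (L : Subgroup G)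
    (horb : ∀ x : G ⧸ L, x ≠ ((1 : G) : G ⧸ L) → (MulAction.orbit L x).Infinite)
    (f : lp (fun _ : G ⧸ L => ℂ) 2)
    (hinv : ∀ l : L, ∀ x : G ⧸ L, f (l • x) = f x) :
    ∀ x : G ⧸ L, x ≠ ((1 : G) : G ⧸ L) → f x = 0 :=
  fun x hx => Function.notMem_support.mp fun hfx => horb x hx <|
    invariant_l2_function_supported_at_base_coset_general ENNReal.ofNat_ne_top (lp.memℓp f) hinv hfx
end

section
/- Let G be a group and L a subgroup of G such that every orbit of the natural action of L on the coset space G/L, other than the singleton orbit of the base coset eL, is infinite. Let G act unitarily on the Hilbert space ℓ²(G/L) by (π(g)f)(x) = f(g⁻¹·x). Then this representation is topologically irreducible: every closed subspace of ℓ²(G/L) that is invariant under π(g) for all g ∈ G is either {0} or all of ℓ²(G/L). -/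
/-!
The indicator `δ` of the base coset is fixed by `L`, and it is a cyclic vector because `G` permutes
the cosets transitively. A square-summable function fixed by `L` is constant on `L`-orbits, hence
vanishes on the infinite ones, so the `L`-fixed vectors are exactly the multiples of `δ`. The
orthogonal projection onto a closed invariant subspace `V` commutes with `G`, so it sends `δ` to an
`L`-fixed vector `c • δ`. If `c ≠ 0` then `δ ∈ V`, otherwise `δ ∈ Vᗮ`; as both subspaces are closed
and invariant, the one containing the cyclic vector `δ` is the whole space.
-/

open scoped ENNReal
set_option maxHeartbeats 1000000

theorem l2Translate_memℓp {G : Type*} [Group G] (L : Subgroup G) (g : G)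
    (f : lp (fun _ : G ⧸ L => ℂ) 2) :
    Memℓp (fun x : G ⧸ L => f (g⁻¹ • x)) 2 := by
  apply memℓp_gen
  have hs : Summable fun x : G ⧸ L => ‖f x‖ ^ (2 : ℝ≥0∞).toReal :=
    f.property.summable (by norm_num)
  exact (MulAction.toPerm (β := G ⧸ L) g⁻¹).summable_iff.mpr hs

/-- The unitary translation operator `π(g)` on `ℓ²(G ⧸ L)`, given by
`(π(g) f)(x) = f (g⁻¹ • x)`. -/
noncomputable def l2Translate {G : Type*} [Group G] (L : Subgroup G) (g : G)
    (f : lp (fun _ : G ⧸ L => ℂ) 2) : lp (fun _ : G ⧸ L => ℂ) 2 :=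
  ⟨fun x => f (g⁻¹ • x), l2Translate_memℓp L g f⟩

open scoped lp
open Submodule (span)

theorem eq_top_of_cyclic_mem {ι R M : Type*} [Semiring R] [AddCommMonoid M] [Module R M]
    [TopologicalSpace M] [ContinuousAdd M] [ContinuousConstSMul R M] {T : ι → M → M} {v : M}
    (hcyc : (span R (Set.range fun i => T i v)).topologicalClosure = ⊤) {V : Submodule R M}
    (hVc : IsClosed (V : Set M)) (hV : ∀ i, ∀ w ∈ V, T i w ∈ V) (hv : v ∈ V) : V = ⊤ := by
  have horbit : Set.range (fun i => T i v) ⊆ V := by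
    rintro _ ⟨i, rfl⟩
    exact hV i v hv
  exact top_unique <| hcyc.ge.trans <|
    Submodule.topologicalClosure_minimal _ (Submodule.span_le.mpr horbit) hVc

section UnitaryRepresentation

variable {𝕜 E G : Type*} [RCLike 𝕜] [NormedAddCommGroup E] [InnerProductSpace 𝕜 E] [Group G]
  {π : G →* (E ≃ₗᵢ[𝕜] E)} {V : Submodule 𝕜 E}

theorem orthogonal_invariant_of_invariant (hV : ∀ g, ∀ w ∈ V, π g w ∈ V) (g : G) {w : E}
    (hw : w ∈ Vᗮ) : π g w ∈ Vᗮ := by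
  rw [Submodule.mem_orthogonal] at hw ⊢
  intro u hu
  calc inner 𝕜 u (π g w)
      = inner 𝕜 (π g (π g⁻¹ u)) (π g w) := by
        rw [map_inv, LinearIsometryEquiv.coe_inv, LinearIsometryEquiv.apply_symm_apply]
    _ = inner 𝕜 (π g⁻¹ u) w := (π g).inner_map_map _ _
    _ = 0 := hw _ (hV g⁻¹ u hu)

theorem map_starProjection_of_invariant_s5 [V.HasOrthogonalProjection]
    (hV : ∀ g, ∀ w ∈ V, π g w ∈ V) (g : G) (w : E) :
    π g (V.starProjection w) = V.starProjection (π g w) := by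
  refine (Submodule.eq_starProjection_of_mem_orthogonal
    (hV g _ (V.starProjection_apply_mem w)) ?_).symm
  rw [← map_sub]
  exact orthogonal_invariant_of_invariant hV g (V.sub_starProjection_mem_orthogonal w)

theorem eq_bot_or_eq_top_of_cyclic_of_fixed_mem_span [CompleteSpace E] {v : E}
    (hcyc : (span 𝕜 (Set.range fun g => π g v)).topologicalClosure = ⊤)
    (hfix : ∀ w, (∀ g, π g v = v → π g w = w) → w ∈ span 𝕜 {v})
    (hVc : IsClosed (V : Set E)) (hV : ∀ g, ∀ w ∈ V, π g w ∈ V) : V = ⊥ ∨ V = ⊤ := by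
  have : CompleteSpace V := hVc.completeSpace_coe
  have hproj : V.starProjection v ∈ span 𝕜 {v} := hfix _ fun g hg => by
    rw [map_starProjection_of_invariant_s5 hV, hg]
  obtain ⟨c, hc⟩ := Submodule.mem_span_singleton.mp hproj
  rcases eq_or_ne c 0 with rfl | hc0
  · left
    have hv : v ∈ Vᗮ := by
      rw [← Submodule.starProjection_apply_eq_zero_iff, ← hc, zero_smul]
    exact V.orthogonal_eq_top_iff.mp <| eq_top_of_cyclic_mem hcyc V.isClosed_orthogonal
      (fun g _ => orthogonal_invariant_of_invariant hV g) hv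
  · right
    have hv : v ∈ V := (V.smul_mem_iff hc0).mp (hc ▸ V.starProjection_apply_mem v)
    exact eq_top_of_cyclic_mem hcyc hVc hV hv

end UnitaryRepresentation

section Lp

variable {𝕜 E X Y : Type*} {p : ℝ≥0∞} [NormedAddCommGroup E]

theorem memℓp_comp_injective {f : X → E} (hf : Memℓp f p) {φ : Y → X}
    (hφ : Function.Injective φ) : Memℓp (f ∘ φ) p := by
  rcases p.trichotomy with rfl | rfl | hp
  · exact memℓp_zero (hf.finite_dsupport.preimage hφ.injOn)
  · exact memℓp_infty (hf.bddAbove.mono (Set.range_comp_subset_range φ fun x => ‖f x‖))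
  · exact memℓp_gen ((hf.summable hp).comp_injective hφ)

theorem eq_zero_of_memℓp_const [Infinite X] (hp : p ≠ ∞) {c : E}
    (hc : Memℓp (fun _ : X => c) p) : c = 0 := by
  have hq : 0 < (max p 1).toReal := ENNReal.toReal_pos (by simp) (by simp [hp])
  have hsum : Summable fun _ : X => ‖c‖ ^ (max p 1).toReal :=
    (hc.of_exponent_ge (le_max_left p 1)).summable hq
  by_contra hc0
  exact not_finite_iff_infinite.mpr ‹Infinite X› <|
    .of_summable_const (Real.rpow_pos_of_pos (norm_pos_iff.mpr hc0) _) hsum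

theorem eq_zero_of_memℓp_of_const_on_infinite {f : X → E} (hf : Memℓp f p) (hp : p ≠ ∞)
    {s : Set X} (hs : s.Infinite) {c : E} (hfs : ∀ x ∈ s, f x = c) : c = 0 := by
  have : Infinite s := hs.to_subtype
  have hrestrict : f ∘ ((↑) : s → X) = fun _ => c := funext fun x => hfs x x.2
  exact eq_zero_of_memℓp_const hp (hrestrict ▸ memℓp_comp_injective hf Subtype.val_injective)

variable [NormedField 𝕜] [NormedSpace 𝕜 E] [Fact (1 ≤ p)]

variable (𝕜 E p) in
/-- Relabelling the index set along a bijection, as a linear isometry of `ℓ^p` spaces. -/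
noncomputable def lpCongrLeft (e : X ≃ Y) : ℓ^p(X, E) ≃ₗᵢ[𝕜] ℓ^p(Y, E) where
  toFun f := ⟨f ∘ e.symm, memℓp_comp_injective (lp.memℓp f) e.symm.injective⟩
  invFun f := ⟨f ∘ e, memℓp_comp_injective (lp.memℓp f) e.injective⟩
  map_add' _ _ := rfl
  map_smul' _ _ := rfl
  left_inv f := lp.ext <| funext fun x => congrArg f (e.symm_apply_apply x)
  right_inv f := lp.ext <| funext fun y => congrArg f (e.apply_symm_apply y)
  norm_map' f := by
    rcases p.dichotomy with rfl | hp
    · exact e.symm.iSup_comp (g := fun x => ‖f x‖)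
    · have hp : 0 < p.toReal := zero_lt_one.trans_le hp
      rw [lp.norm_eq_tsum_rpow hp, lp.norm_eq_tsum_rpow hp]
      exact congrArg (· ^ (1 / p.toReal)) (e.symm.tsum_eq fun x => ‖f x‖ ^ p.toReal)

end Lp

section PermutationRepresentation

variable {𝕜 E G X : Type*} {p : ℝ≥0∞} [NormedAddCommGroup E] [NormedField 𝕜] [NormedSpace 𝕜 E]
  [Fact (1 ≤ p)] [Group G] [MulAction G X]

variable (𝕜 E G X p) in
/-- The representation of `G` by isometries of `ℓ^p(X, E)` induced by an action on the index set;
for `X = G ⧸ L`, `E = 𝕜` and `p = 2` it is the quasi-regular representation. -/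
noncomputable def lpPermutationRep : G →* (ℓ^p(X, E) ≃ₗᵢ[𝕜] ℓ^p(X, E)) where
  toFun g := lpCongrLeft 𝕜 E p (MulAction.toPerm g)
  map_one' := by
    ext f x
    exact congrArg f (by simp)
  map_mul' g h := by
    ext f x
    exact congrArg f (by simp [mul_smul])

theorem lpPermutationRep_apply (g : G) (f : ℓ^p(X, E)) (x : X) :
    lpPermutationRep 𝕜 E G X p g f x = f (g⁻¹ • x) :=
  rfl

theorem lpPermutationRep_single [DecidableEq X] (g : G) (x : X) (a : E) :
    lpPermutationRep 𝕜 E G X p g (lp.single p x a) = lp.single p (g • x) a := by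
  ext y
  simp only [lpPermutationRep_apply, lp.single_apply, Pi.single_apply, inv_smul_eq_iff]

theorem apply_eq_zero_of_lpPermutationRep_fixed (hp : p ≠ ∞) {H : Subgroup G}
    {f : ℓ^p(X, E)} (hf : ∀ h ∈ H, lpPermutationRep 𝕜 E G X p h f = f) {x : X}
    (hx : (MulAction.orbit H x).Infinite) : f x = 0 := by
  refine eq_zero_of_memℓp_of_const_on_infinite (lp.memℓp f) hp hx ?_
  rintro _ ⟨h, rfl⟩
  calc f (h • x)
      = lpPermutationRep 𝕜 E G X p h f (h • x) := by rw [hf h h.2]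
    _ = f x := congrArg f (inv_smul_smul (h : G) x)

theorem mem_span_single_of_lpPermutationRep_fixed [DecidableEq X] (hp : p ≠ ∞) {H : Subgroup G}
    {x₀ : X} (horb : ∀ x, x ≠ x₀ → (MulAction.orbit H x).Infinite) {f : ℓ^p(X, 𝕜)}
    (hf : ∀ h ∈ H, lpPermutationRep 𝕜 𝕜 G X p h f = f) : f ∈ span 𝕜 {lp.single p x₀ (1 : 𝕜)} := by
  refine Submodule.mem_span_singleton.mpr ⟨f x₀, ?_⟩
  ext x
  rcases eq_or_ne x x₀ with rfl | hx
  · simp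
  · simp [hx, apply_eq_zero_of_lpPermutationRep_fixed hp hf (horb x hx)]

theorem topologicalClosure_span_range_lpPermutationRep_single [DecidableEq X]
    [MulAction.IsPretransitive G X] (hp : p ≠ ∞) (x₀ : X) :
    (span 𝕜 (Set.range fun g =>
      lpPermutationRep 𝕜 𝕜 G X p g (lp.single p x₀ 1))).topologicalClosure = ⊤ := by
  set W := span 𝕜 (Set.range fun g => lpPermutationRep 𝕜 𝕜 G X p g (lp.single p x₀ 1))
  have hsingle (x : X) (a : 𝕜) : lp.single p x a ∈ W := by
    obtain ⟨g, rfl⟩ := MulAction.exists_smul_eq G x₀ x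
    have hg : lp.single p (g • x₀) (1 : 𝕜) ∈ W :=
      lpPermutationRep_single (𝕜 := 𝕜) (p := p) g x₀ (1 : 𝕜) ▸ Submodule.subset_span ⟨g, rfl⟩
    simpa only [← lp.single_smul, smul_eq_mul, mul_one] using W.smul_mem a hg
  refine Submodule.eq_top_iff'.mpr fun f => ?_
  exact mem_closure_of_tendsto (lp.hasSum_single hp f)
    (.of_forall fun s => W.sum_mem fun x _ => hsingle x (f x))

end PermutationRepresentation

theorem quasiRegular_representation_irreducible_general {𝕜 G X : Type*} [RCLike 𝕜] [Group G]
    [MulAction G X] [MulAction.IsPretransitive G X] (x₀ : X)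
    (horb : ∀ x, x ≠ x₀ → (MulAction.orbit (MulAction.stabilizer G x₀) x).Infinite)
    {V : Submodule 𝕜 ℓ²(X, 𝕜)} (hVc : IsClosed (V : Set ℓ²(X, 𝕜)))
    (hV : ∀ g, ∀ f ∈ V, lpPermutationRep 𝕜 𝕜 G X 2 g f ∈ V) : V = ⊥ ∨ V = ⊤ := by
  classical
  have htwo : (2 : ℝ≥0∞) ≠ ∞ := ENNReal.ofNat_ne_top
  refine eq_bot_or_eq_top_of_cyclic_of_fixed_mem_span
    (topologicalClosure_span_range_lpPermutationRep_single htwo x₀) (fun f hf => ?_) hVc hV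
  refine mem_span_single_of_lpPermutationRep_fixed htwo horb fun g hg => hf g ?_
  rw [lpPermutationRep_single, MulAction.mem_stabilizer_iff.mp hg]

/-- If all orbits of a subgroup `L` on `G ⧸ L`, other than the base coset, are infinite,
then the quasi-regular unitary representation of `G` on `ℓ²(G ⧸ L)` is topologically
irreducible. -/
theorem quasiRegular_representation_irreducible
    {G : Type*} [Group G] (L : Subgroup G)
    (horb : ∀ x : G ⧸ L, x ≠ ((1 : G) : G ⧸ L) → (MulAction.orbit L x).Infinite) :
    ∀ V : Submodule ℂ (lp (fun _ : G ⧸ L => ℂ) 2),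
      IsClosed (V : Set (lp (fun _ : G ⧸ L => ℂ) 2)) →
      (∀ g : G, ∀ f ∈ V, l2Translate L g f ∈ V) →
      V = ⊥ ∨ V = ⊤ := fun _ hVc hV =>
  quasiRegular_representation_irreducible_general ((1 : G) : G ⧸ L)
    (by rwa [MulAction.stabilizer_quotient]) hVc hV
end

section
/- Let H be a complex Hilbert space containing two linearly independent vectors (i.e., of dimension at least 2). Let 𝒜 be a set of bounded (continuous) linear operators on H such that any two elements of 𝒜 commute and such that 𝒜 is closed under taking adjoints (A ∈ 𝒜 implies A* ∈ 𝒜). Then there exists a closed subspace V of H with V ≠ {0} and V ≠ H such that A(V) ⊆ V for every A ∈ 𝒜. -/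
/-!
If every operator of the family is scalar, every line is invariant. Otherwise some member `A` is
normal and not scalar, so its spectrum contains two distinct points. Continuous functions `f`, `g`
with `f * g = 0` that do not vanish at these points give nonzero operators `f(A)`, `g(A)` with
`f(A) g(A) = 0`. Then `ker f(A)` is not the whole space, is nonzero since it contains the range of
`g(A)`, and is invariant under everything that commutes with `A`: by Fuglede's theorem, such an
operator commutes with the adjoint of `A` as well, hence with `f(A)`.
-/

lemma exists_continuous_mul_eq_zero_of_ne {X : Type*} [MetricSpace X] {x y : X} (hxy : x ≠ y) :
    ∃ f g : X → ℝ, Continuous f ∧ Continuous g ∧ f x ≠ 0 ∧ g y ≠ 0 ∧ f * g = 0 := by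
  -- `f` and `g` are supported on the two half-spaces cut out by the bisector of `x` and `y`.
  refine ⟨fun z ↦ max (dist z y - dist z x) 0, fun z ↦ max (dist z x - dist z y) 0,
    by fun_prop, by fun_prop, ?_, ?_, ?_⟩
  · simp [hxy]
  · simp [hxy.symm]
  · funext z
    rcases le_total (dist z x) (dist z y) with h | h <;> simp [h]

section FunctionalCalculus

variable {𝕜 A : Type*} {p : A → Prop} [RCLike 𝕜] [Ring A] [StarRing A] [TopologicalSpace A]
  [Algebra 𝕜 A] [ContinuousFunctionalCalculus 𝕜 A p] {a : A}

lemma cfc_ne_zero_of_mem_spectrum {f : 𝕜 → 𝕜} {x : 𝕜} (ha : p a)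
    (hf : ContinuousOn f (spectrum 𝕜 a)) (hx : x ∈ spectrum 𝕜 a) (hfx : f x ≠ 0) : cfc f a ≠ 0 := by
  intro h
  rw [← cfc_zero 𝕜 a] at h
  exact hfx (eqOn_of_cfc_eq_cfc h hf continuousOn_const ha hx)

lemma spectrum_nontrivial_of_notMem_range_algebraMap (ha : p a)
    (hscalar : a ∉ Set.range (algebraMap 𝕜 A)) : (spectrum 𝕜 a).Nontrivial := by
  contrapose! hscalar
  obtain ⟨r, hr⟩ : ∃ r, spectrum 𝕜 a ⊆ {r} := by
    rcases hscalar.eq_empty_or_singleton with hempty | ⟨r, hr⟩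
    · exact ⟨0, hempty ▸ Set.empty_subset _⟩
    · exact ⟨r, hr.subset⟩
  exact ⟨r, (CFC.eq_algebraMap_of_spectrum_subset_singleton a r hr ha).symm⟩

lemma exists_cfc_mul_cfc_eq_zero (ha : p a) (hspec : (spectrum 𝕜 a).Nontrivial) :
    ∃ f g : 𝕜 → 𝕜, cfc f a ≠ 0 ∧ cfc g a ≠ 0 ∧ cfc f a * cfc g a = 0 := by
  obtain ⟨x, hx, y, hy, hxy⟩ := hspec
  obtain ⟨f, g, hf, hg, hfx, hgy, hfg⟩ := exists_continuous_mul_eq_zero_of_ne hxy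
  have hf' : Continuous fun z ↦ (f z : 𝕜) := by fun_prop
  have hg' : Continuous fun z ↦ (g z : 𝕜) := by fun_prop
  refine ⟨fun z ↦ f z, fun z ↦ g z,
    cfc_ne_zero_of_mem_spectrum ha hf'.continuousOn hx (RCLike.ofReal_ne_zero.mpr hfx),
    cfc_ne_zero_of_mem_spectrum ha hg'.continuousOn hy (RCLike.ofReal_ne_zero.mpr hgy), ?_⟩
  have hfg' (z : 𝕜) : (f z : 𝕜) * g z = 0 := by
    rw [← RCLike.ofReal_mul, RCLike.ofReal_eq_zero]
    exact congrFun hfg z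
  rw [← cfc_mul _ _ a hf'.continuousOn hg'.continuousOn]
  simp only [hfg', cfc_const_zero]

end FunctionalCalculus

section Kernel

variable {R M N P : Type*} [Semiring R] [AddCommMonoid M] [AddCommMonoid N] [AddCommMonoid P]
  [Module R M] [Module R N] [Module R P]

lemma ker_ne_bot_of_comp_eq_zero {f : N →ₗ[R] P} {g : M →ₗ[R] N} (hfg : f ∘ₗ g = 0) (hg : g ≠ 0) :
    LinearMap.ker f ≠ ⊥ := by
  intro hf
  have hrange : LinearMap.range g ≤ LinearMap.ker f := LinearMap.range_le_ker_iff.mpr hfg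
  exact hg (LinearMap.range_eq_bot.mp (le_bot_iff.mp (hf ▸ hrange)))

lemma apply_mem_ker_of_commute {f g : Module.End R M} (hfg : Commute f g) {x : M}
    (hx : x ∈ LinearMap.ker f) : g x ∈ LinearMap.ker f := by
  rw [LinearMap.mem_ker] at hx ⊢
  rw [← Module.End.mul_apply, hfg.eq, Module.End.mul_apply, hx, map_zero]

end Kernel

lemma span_singleton_ne_top_of_linearIndependent_pair {R M : Type*} [Ring R] [Nontrivial R]
    [AddCommGroup M] [Module R M] {v w : M} (hvw : LinearIndependent R ![v, w]) :
    Submodule.span R {v} ≠ ⊤ := by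
  have hw : w ∉ Submodule.span R {v} := by
    simpa using hvw.notMem_span_image (s := {0}) (x := 1) (by simp)
  exact fun htop ↦ hw (htop ▸ Submodule.mem_top)

section HilbertSpace

variable {H : Type*} [NormedAddCommGroup H] [InnerProductSpace ℂ H] [CompleteSpace H]

theorem exists_hyperinvariant_of_isStarNormal_of_not_scalar {A : H →L[ℂ] H} (hA : IsStarNormal A)
    (hscalar : A ∉ Set.range (algebraMap ℂ (H →L[ℂ] H))) :
    ∃ V : Submodule ℂ H, IsClosed (V : Set H) ∧ V ≠ ⊥ ∧ V ≠ ⊤ ∧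
      ∀ B : H →L[ℂ] H, Commute A B → ∀ x ∈ V, B x ∈ V := by
  obtain ⟨f, g, hf, hg, hfg⟩ := exists_cfc_mul_cfc_eq_zero hA
    (spectrum_nontrivial_of_notMem_range_algebraMap hA hscalar)
  refine ⟨(cfc f A).ker, (cfc f A).isClosed_ker, ?_, ?_, fun B hB x hx ↦ ?_⟩
  · exact ker_ne_bot_of_comp_eq_zero (congrArg ContinuousLinearMap.toLinearMap hfg)
      fun h ↦ hg (ContinuousLinearMap.coe_injective h)
  · exact fun htop ↦ hf (ContinuousLinearMap.coe_injective (LinearMap.ker_eq_top.mp htop))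
  · have hcomm : Commute (cfc f A) B := hB.cfc (hA.commute_star_left hB) f
    exact apply_mem_ker_of_commute (congrArg ContinuousLinearMap.toLinearMap hcomm.eq) hx

theorem commuting_selfadjoint_family_has_proper_invariant_subspace_general
    (hdim : ∃ v w : H, LinearIndependent ℂ ![v, w]) (𝒜 : Set (H →L[ℂ] H))
    (hcomm : ∀ A ∈ 𝒜, ∀ B ∈ 𝒜, Commute A B) (hnormal : ∀ A ∈ 𝒜, IsStarNormal A) :
    ∃ V : Submodule ℂ H, IsClosed (V : Set H) ∧ V ≠ ⊥ ∧ V ≠ ⊤ ∧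
      ∀ A ∈ 𝒜, ∀ x ∈ V, A x ∈ V := by
  by_cases hscalar : 𝒜 ⊆ Set.range (algebraMap ℂ (H →L[ℂ] H))
  · obtain ⟨v, w, hvw⟩ := hdim
    refine ⟨ℂ ∙ v, Submodule.closed_of_finiteDimensional _,
      Submodule.span_singleton_eq_bot.not.mpr (hvw.ne_zero 0),
      span_singleton_ne_top_of_linearIndependent_pair hvw, fun A hA x hx ↦ ?_⟩
    obtain ⟨r, rfl⟩ := hscalar hA
    exact Submodule.smul_mem _ r hx
  · obtain ⟨A, hA, hA_scalar⟩ := Set.not_subset.mp hscalar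
    obtain ⟨V, hclosed, hbot, htop, hV⟩ :=
      exists_hyperinvariant_of_isStarNormal_of_not_scalar (hnormal A hA) hA_scalar
    exact ⟨V, hclosed, hbot, htop, fun B hB ↦ hV B (hcomm A hA B hB)⟩

end HilbertSpace

/-- A commuting family of bounded operators on a complex Hilbert space of dimension at
least two, closed under taking adjoints, has a common closed invariant subspace that is
neither `{0}` nor the whole space. -/
theorem commuting_selfadjoint_family_has_proper_invariant_subspace
    {H : Type*} [NormedAddCommGroup H] [InnerProductSpace ℂ H] [CompleteSpace H]
    (hdim : ∃ v w : H, LinearIndependent ℂ ![v, w])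
    (𝒜 : Set (H →L[ℂ] H))
    (hcomm : ∀ A ∈ 𝒜, ∀ B ∈ 𝒜, A * B = B * A)
    (hadj : ∀ A ∈ 𝒜, ContinuousLinearMap.adjoint A ∈ 𝒜) :
    ∃ V : Submodule ℂ H, IsClosed (V : Set H) ∧ V ≠ ⊥ ∧ V ≠ ⊤ ∧
      ∀ A ∈ 𝒜, ∀ x ∈ V, A x ∈ V :=
  commuting_selfadjoint_family_has_proper_invariant_subspace_general hdim 𝒜 hcomm
    fun A hA ↦ ⟨hcomm _ (hadj A hA) A hA⟩
end
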